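/- The cyclic left A(1)-module A(1)/(Sq³) (quotient by the left ideal generated by Sq³ = Sq¹Sq²) is 5-dimensional over F₂, with one basis element in each of the degrees 0, 1, 2, 3, 4. -/

import Mathlib

noncomputable section

/-- Relations defining A(1): (Sq¹)² = 0, Sq²Sq² = Sq¹Sq²Sq¹, Sq²Sq¹Sq²Sq¹ = Sq¹Sq²Sq¹Sq². -/
inductive A1Rel : FreeAlgebra (ZMod 2) (Fin 2) → FreeAlgebra (ZMod 2) (Fin 2) → Prop
  | sq1_sq1 : A1Rel (FreeAlgebra.ι (ZMod 2) (0 : Fin 2) * FreeAlgebra.ι (ZMod 2) 0) 0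
  | adem : A1Rel (FreeAlgebra.ι (ZMod 2) (1 : Fin 2) * FreeAlgebra.ι (ZMod 2) 1)
      (FreeAlgebra.ι (ZMod 2) (0 : Fin 2) * FreeAlgebra.ι (ZMod 2) 1 * FreeAlgebra.ι (ZMod 2) 0)
  | top : A1Rel
      (FreeAlgebra.ι (ZMod 2) (1 : Fin 2) * FreeAlgebra.ι (ZMod 2) 0 *
        FreeAlgebra.ι (ZMod 2) 1 * FreeAlgebra.ι (ZMod 2) 0)
      (FreeAlgebra.ι (ZMod 2) (0 : Fin 2) * FreeAlgebra.ι (ZMod 2) 1 *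
        FreeAlgebra.ι (ZMod 2) 0 * FreeAlgebra.ι (ZMod 2) 1)

/-- The algebra A(1), subalgebra of the mod-2 Steenrod algebra generated by Sq¹, Sq². -/
abbrev A1 := RingQuot A1Rel

def Sq1 : A1 := RingQuot.mkAlgHom (ZMod 2) A1Rel (FreeAlgebra.ι (ZMod 2) 0)
def Sq2 : A1 := RingQuot.mkAlgHom (ZMod 2) A1Rel (FreeAlgebra.ι (ZMod 2) 1)
def Sq3 : A1 := Sq1 * Sq2

/-- Generators, for building monomial words. -/
def A1gen : Fin 2 → A1
  | 0 => Sq1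
  | 1 => Sq2

/-- Weight of a word: Sq¹ has degree 1, Sq² has degree 2. -/
def A1wt (l : List (Fin 2)) : ℕ := (l.map fun i => (i : ℕ) + 1).sum

/-- The product of a word of generators. -/
def A1word (l : List (Fin 2)) : A1 := (l.map A1gen).prod

/-- The degree-`n` graded component of A(1): the F₂-span of monomials of weight `n`. -/
def A1deg (n : ℕ) : Submodule (ZMod 2) A1 :=
  Submodule.span (ZMod 2) {x | ∃ l, A1wt l = n ∧ x = A1word l}

/-- The degree-`n` component of a cyclic module A(1)/I. -/
def A1qdeg (I : Submodule A1 A1) (n : ℕ) : Submodule (ZMod 2) (A1 ⧸ I) :=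
  Submodule.map (I.mkQ.restrictScalars (ZMod 2)) (A1deg n)

theorem Sq1_mul_Sq1 : Sq1 * Sq1 = 0 := by
  simpa [Sq1] using RingQuot.mkAlgHom_rel (ZMod 2) A1Rel.sq1_sq1

theorem Sq2_mul_Sq2 : Sq2 * Sq2 = Sq1 * Sq2 * Sq1 := by
  simpa [Sq1, Sq2] using RingQuot.mkAlgHom_rel (ZMod 2) A1Rel.adem

theorem Sq2_Sq1_Sq2_Sq1 : Sq2 * Sq1 * Sq2 * Sq1 = Sq1 * Sq2 * Sq1 * Sq2 := by
  simpa [Sq1, Sq2] using RingQuot.mkAlgHom_rel (ZMod 2) A1Rel.top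

/-- The cyclic module A(1)/(Sq³). -/
abbrev A1ModSq3 := A1 ⧸ (Submodule.span A1 {Sq3})

/-- Representatives in A(1) of the basis elements of A(1)/(Sq³), indexed by degree. -/
def basisRep : ℕ → A1
  | 0 => 1
  | 1 => Sq1
  | 2 => Sq2
  | 3 => Sq2 * Sq1
  | 4 => Sq1 * Sq2 * Sq1
  | _ => 0

/-- The basis element of A(1)/(Sq³) in degree `n`, which is zero for `n ≥ 5`. -/
def basisElem (n : ℕ) : A1ModSq3 := (Submodule.span A1 {Sq3}).mkQ (basisRep n)

theorem mkQ_mul_Sq1_mul_Sq2 (x : A1) :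
    (Submodule.span A1 {Sq3}).mkQ (x * (Sq1 * Sq2)) = 0 := by
  rw [Submodule.mkQ_apply, Submodule.Quotient.mk_eq_zero]
  exact Submodule.smul_mem _ x (Submodule.mem_span_singleton_self Sq3)

theorem smul_basisElem (x : A1) (n : ℕ) :
    x • basisElem n = (Submodule.span A1 {Sq3}).mkQ (x * basisRep n) := rfl

theorem Sq1_smul_basisElem (n : ℕ) :
    Sq1 • basisElem n = 0 ∨ Sq1 • basisElem n = basisElem (n + 1) := by
  rw [smul_basisElem]
  match n with
  | 0 => right; simp [basisElem, basisRep]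
  | 1 => left; simp [basisRep, Sq1_mul_Sq1]
  | 2 => left; simpa [basisRep] using mkQ_mul_Sq1_mul_Sq2 1
  | 3 => right; simp [basisElem, basisRep, mul_assoc]
  | 4 => left; simp [basisRep, ← mul_assoc, Sq1_mul_Sq1]
  | n + 5 => left; simp [basisRep]

theorem Sq2_smul_basisElem (n : ℕ) :
    Sq2 • basisElem n = 0 ∨ Sq2 • basisElem n = basisElem (n + 2) := by
  rw [smul_basisElem]
  match n with
  | 0 => right; simp [basisElem, basisRep]
  | 1 => right; simp [basisElem, basisRep]
  | 2 => right; simp [basisElem, basisRep, Sq2_mul_Sq2]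
  | 3 =>
    left
    have h : Sq2 * (Sq2 * Sq1) = 0 := by
      rw [← mul_assoc, Sq2_mul_Sq2, mul_assoc, Sq1_mul_Sq1, mul_zero]
    simp [basisRep, h]
  | 4 =>
    left
    have h : Sq2 * (Sq1 * Sq2 * Sq1) = Sq1 * Sq2 * (Sq1 * Sq2) := by
      simpa only [mul_assoc] using Sq2_Sq1_Sq2_Sq1
    simpa only [basisRep, h] using mkQ_mul_Sq1_mul_Sq2 (Sq1 * Sq2)
  | n + 5 => left; simp [basisRep]

theorem A1gen_smul_basisElem (i : Fin 2) (n : ℕ) :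
    A1gen i • basisElem n = 0 ∨ A1gen i • basisElem n = basisElem (i + 1 + n) := by
  fin_cases i
  · simpa [A1gen, add_comm] using Sq1_smul_basisElem n
  · simpa [A1gen, add_comm] using Sq2_smul_basisElem n

theorem mkQ_A1word (l : List (Fin 2)) :
    (Submodule.span A1 {Sq3}).mkQ (A1word l) = 0 ∨
      (Submodule.span A1 {Sq3}).mkQ (A1word l) = basisElem (A1wt l) := by
  induction l with
  | nil => right; simp [A1word, A1wt, basisElem, basisRep]
  | cons i l ih =>
    have h : (Submodule.span A1 {Sq3}).mkQ (A1word (i :: l)) =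
        A1gen i • (Submodule.span A1 {Sq3}).mkQ (A1word l) := by
      simp only [A1word, List.map_cons, List.prod_cons, ← smul_eq_mul, map_smul]
    have hw : A1wt (i :: l) = i + 1 + A1wt l := by simp [A1wt]
    rw [h, hw]
    rcases ih with ih | ih
    · left; rw [ih, smul_zero]
    · rw [ih]; exact A1gen_smul_basisElem i _

theorem basisRep_mem_A1deg (n : ℕ) : basisRep n ∈ A1deg n := by
  match n with
  | 0 => exact Submodule.subset_span ⟨[], by simp [A1wt, A1word, basisRep]⟩
  | 1 => exact Submodule.subset_span ⟨[0], by simp [A1wt, A1word, A1gen, basisRep]⟩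
  | 2 => exact Submodule.subset_span ⟨[1], by simp [A1wt, A1word, A1gen, basisRep]⟩
  | 3 => exact Submodule.subset_span ⟨[1, 0], by simp [A1wt, A1word, A1gen, basisRep]⟩
  | 4 =>
    exact Submodule.subset_span
      ⟨[0, 1, 0], by simp [A1wt, A1word, A1gen, basisRep, mul_assoc]⟩
  | n + 5 => exact Submodule.zero_mem _

theorem A1qdeg_eq_span (n : ℕ) :
    A1qdeg (Submodule.span A1 {Sq3}) n = Submodule.span (ZMod 2) {basisElem n} := by
  apply le_antisymm
  · rw [A1qdeg, A1deg, Submodule.map_span, Submodule.span_le]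
    rintro _ ⟨_, ⟨l, rfl, rfl⟩, rfl⟩
    rcases mkQ_A1word l with h | h
    · exact h ▸ Submodule.zero_mem _
    · exact h ▸ Submodule.mem_span_singleton_self _
  · rw [Submodule.span_singleton_le_iff_mem]
    exact ⟨_, basisRep_mem_A1deg n, rfl⟩

/-- The matrices of Sq¹ and Sq² acting on A(1)/(Sq³). -/
def genMatrix : Fin 2 → Matrix (Fin 5) (Fin 5) (ZMod 2)
  | 0 => !![0, 0, 0, 0, 0; 1, 0, 0, 0, 0; 0, 0, 0, 0, 0; 0, 0, 0, 0, 0; 0, 0, 0, 1, 0]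
  | 1 => !![0, 0, 0, 0, 0; 0, 0, 0, 0, 0; 1, 0, 0, 0, 0; 0, 1, 0, 0, 0; 0, 0, 1, 0, 0]

/-- The representation of A(1) on `F₂⁵` given by `genMatrix`. -/
def matrixRep : A1 →ₐ[ZMod 2] Matrix (Fin 5) (Fin 5) (ZMod 2) :=
  RingQuot.liftAlgHom (ZMod 2) ⟨FreeAlgebra.lift (ZMod 2) genMatrix, by
    rintro _ _ (_ | _ | _) <;> simp only [map_mul, map_zero, FreeAlgebra.lift_ι_apply] <;> decide⟩

theorem matrixRep_Sq1 : matrixRep Sq1 = genMatrix 0 := by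
  simp [matrixRep, Sq1]

theorem matrixRep_Sq2 : matrixRep Sq2 = genMatrix 1 := by
  simp [matrixRep, Sq2]

/-- The first column of `matrixRep`. -/
def firstColumn : A1 →ₗ[ZMod 2] (Fin 5 → ZMod 2) where
  toFun x i := matrixRep x i 0
  map_add' x y := by ext; simp
  map_smul' c x := by ext; simp

theorem firstColumn_basisRep (i : Fin 5) : firstColumn (basisRep i) = Pi.single i 1 := by
  ext j
  fin_cases i <;>
    simp only [firstColumn, basisRep, LinearMap.coe_mk, AddHom.coe_mk, map_mul, map_one,
      matrixRep_Sq1, matrixRep_Sq2] <;>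
    revert j <;> decide

theorem firstColumn_eq_zero {x : A1} (hx : x ∈ Submodule.span A1 {Sq3}) : firstColumn x = 0 := by
  obtain ⟨y, rfl⟩ := Submodule.mem_span_singleton.1 hx
  have h : ∀ k, (genMatrix 0 * genMatrix 1) k 0 = 0 := by decide
  ext i
  simp [firstColumn, Sq3, matrixRep_Sq1, matrixRep_Sq2, Matrix.mul_apply (M := matrixRep y), h]

theorem linearIndependent_basisElem :
    LinearIndependent (ZMod 2) fun i : Fin 5 => basisElem i := by
  rw [Fintype.linearIndependent_iff]
  intro g hg
  have hm : ∑ i : Fin 5, g i • basisRep i ∈ Submodule.span A1 {Sq3} := by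
    rw [← Submodule.Quotient.mk_eq_zero, ← hg]
    exact map_sum ((Submodule.span A1 {Sq3}).mkQ.restrictScalars (ZMod 2)) _ _
  intro j
  simpa [firstColumn_basisRep, Pi.single_apply] using congrFun (firstColumn_eq_zero hm) j

theorem basisElem_mem_span (n : ℕ) :
    basisElem n ∈ Submodule.span (ZMod 2) (Set.range fun i : Fin 5 => basisElem i) := by
  match n with
  | 0 => exact Submodule.subset_span ⟨0, rfl⟩
  | 1 => exact Submodule.subset_span ⟨1, rfl⟩
  | 2 => exact Submodule.subset_span ⟨2, rfl⟩
  | 3 => exact Submodule.subset_span ⟨3, rfl⟩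
  | 4 => exact Submodule.subset_span ⟨4, rfl⟩
  | n + 5 => exact Submodule.zero_mem _

theorem mkAlgHom_ι (i : Fin 2) :
    RingQuot.mkAlgHom (ZMod 2) A1Rel (FreeAlgebra.ι (ZMod 2) i) = A1gen i := by
  fin_cases i <;> rfl

theorem smul_mem_span_basisElem (x : FreeAlgebra (ZMod 2) (Fin 2)) :
    ∀ q ∈ Submodule.span (ZMod 2) (Set.range fun i : Fin 5 => basisElem i),
      RingQuot.mkAlgHom (ZMod 2) A1Rel x • q ∈
        Submodule.span (ZMod 2) (Set.range fun i : Fin 5 => basisElem i) := by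
  induction x using FreeAlgebra.induction with
  | grade0 r =>
    intro q hq
    rw [AlgHom.commutes, algebraMap_smul]
    exact Submodule.smul_mem _ r hq
  | grade1 i =>
    intro q hq
    rw [mkAlgHom_ι]
    induction hq using Submodule.span_induction with
    | mem q hq =>
      obtain ⟨j, rfl⟩ := hq
      rcases A1gen_smul_basisElem i j with h | h
      · exact h ▸ Submodule.zero_mem _
      · exact h ▸ basisElem_mem_span _
    | zero => rw [smul_zero]; exact Submodule.zero_mem _
    | add p q _ _ hp hq => rw [smul_add]; exact Submodule.add_mem _ hp hq
    | smul c q _ hq => rw [smul_comm]; exact Submodule.smul_mem _ c hq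
  | mul x y hx hy =>
    intro q hq
    rw [map_mul, mul_smul]
    exact hx _ (hy q hq)
  | add x y hx hy =>
    intro q hq
    rw [map_add, add_smul]
    exact Submodule.add_mem _ (hx q hq) (hy q hq)

theorem span_basisElem :
    Submodule.span (ZMod 2) (Set.range fun i : Fin 5 => basisElem i) = ⊤ := by
  rw [eq_top_iff]
  intro q _
  obtain ⟨x, rfl⟩ := Submodule.mkQ_surjective _ q
  obtain ⟨x, rfl⟩ := RingQuot.mkAlgHom_surjective (ZMod 2) A1Rel x
  simpa [smul_basisElem, basisRep] using smul_mem_span_basisElem x _ (basisElem_mem_span 0)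

/-- A(1)/(Sq³) is 5-dimensional over F₂, with one basis element in each of the
degrees 0, 1, 2, 3, 4. -/
theorem A1_mod_sq3 :
    Module.finrank (ZMod 2) (A1 ⧸ (Submodule.span A1 {Sq3})) = 5 ∧
    ∀ n : ℕ, Module.finrank (ZMod 2) (A1qdeg (Submodule.span A1 {Sq3}) n) =
      if n ≤ 4 then 1 else 0 := by
  refine ⟨?_, fun n => ?_⟩
  · simpa using Module.finrank_eq_card_basis
      (Module.Basis.mk linearIndependent_basisElem span_basisElem.ge)
  · rw [A1qdeg_eq_span]
    split_ifs with hn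
    · exact finrank_span_singleton
        (linearIndependent_basisElem.ne_zero (⟨n, by omega⟩ : Fin 5))
    · obtain ⟨m, rfl⟩ := Nat.exists_eq_add_of_le' (show 5 ≤ n by omega)
      have h : basisElem (m + 5) = 0 := map_zero _
      simp [h]

end
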